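/- arXiv:1904.07674 — 2 statements merged into one kernel-verified Lean document; each statement's English description precedes it below -/
import Mathlib

section
/- For all integers n, k, j with 1 ≤ k ≤ n and 0 ≤ j ≤ n−k, the number of unordered partitions π of [n] = {1,…,n} into k nonempty lists such that nse(π) = j equals c(n, n−j) · S(n−j, k), where c denotes the unsigned Stirling number of the first kind and S denotes the Stirling number of the second kind. -/
open Finset

/-- The number of cycles (including fixed points) of a permutation of `Fin n`. -/
noncomputable def cycleCount {n : ℕ} (σ : Equiv.Perm (Fin n)) : ℕ :=
  σ.cycleType.card + (Finset.univ.filter fun x => σ x = x).card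

/-- The unsigned Stirling number of the first kind `c(n,k)`: the number of
permutations of an `n`-element set with exactly `k` cycles. -/
noncomputable def stirlingFirst (n k : ℕ) : ℕ :=
  Set.ncard {σ : Equiv.Perm (Fin n) | cycleCount σ = k}

/-- The signed Stirling number of the first kind `s(n,k) = (-1)^(n-k) c(n,k)`. -/
noncomputable def stirlingFirstSigned (n k : ℕ) : ℤ :=
  (-1) ^ (n - k) * (stirlingFirst n k : ℤ)

/-- `P` is an (unordered) partition of `Fin n` into nonempty blocks. -/
def IsPartitionOf (n : ℕ) (P : Finset (Finset (Fin n))) : Prop :=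
  (∀ b ∈ P, b.Nonempty) ∧ (∀ b ∈ P, ∀ c ∈ P, b ≠ c → Disjoint b c) ∧
    ∀ x : Fin n, ∃ b ∈ P, x ∈ b

/-- The Stirling number of the second kind `S(n,k)`: the number of partitions of an
`n`-element set into exactly `k` nonempty blocks. -/
noncomputable def stirlingSecond (n k : ℕ) : ℕ :=
  Set.ncard {P : Finset (Finset (Fin n)) | IsPartitionOf n P ∧ P.card = k}

/-- The Bell number `B n`: the number of partitions of an `n`-element set into
nonempty blocks. -/
noncomputable def bell (n : ℕ) : ℕ :=
  Set.ncard {P : Finset (Finset (Fin n)) | IsPartitionOf n P}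

/-- The statistic `nse` of a list: the number of positions `j` such that some later
entry is smaller than the entry at position `j`. -/
def nseList {α : Type*} [LinearOrder α] : List α → ℕ
  | [] => 0
  | a :: w => (if ∃ b ∈ w, b < a then 1 else 0) + nseList w

/-- `B` is an ordered set partition ("list of sets") of `Fin n` into `k` pairwise
disjoint nonempty blocks. -/
def IsOrderedSetPartition (n k : ℕ) (B : Fin k → Finset (Fin n)) : Prop :=
  (∀ j, (B j).Nonempty) ∧ (∀ j l, j ≠ l → Disjoint (B j) (B l)) ∧
    ∀ x : Fin n, ∃ j, x ∈ B j

/-- The statistic `nsb` of an ordered set partition: the number of indices `j`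
such that `min (B j) > min (B l)` for some `l > j`. -/
def nsbOSP {n k : ℕ} (B : Fin k → Finset (Fin n)) : ℕ :=
  (Finset.univ.filter fun j : Fin k => ∃ l, j < l ∧ (B l).min < (B j).min).card

/-- `P` is a "set of lists" partition of `Fin n`: an unordered collection of nonempty
sequences of distinct elements, with pairwise disjoint underlying sets covering `Fin n`. -/
def IsSetOfLists (n : ℕ) (P : Finset (List (Fin n))) : Prop :=
  (∀ w ∈ P, w ≠ []) ∧ (∀ w ∈ P, w.Nodup) ∧
    (∀ w ∈ P, ∀ u ∈ P, w ≠ u → ∀ x ∈ w, x ∉ u) ∧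
    ∀ x : Fin n, ∃ w ∈ P, x ∈ w

/-- The statistic `nse` of a set of lists: the sum of `nseList` over its blocks. -/
def nseSL {n : ℕ} (P : Finset (List (Fin n))) : ℕ := ∑ w ∈ P, nseList w

/-- `L` is a "list of lists" partition of `Fin n` into `k` blocks: a sequence of `k`
nonempty sequences of distinct elements, with pairwise disjoint underlying sets
covering `Fin n`. -/
def IsListOfLists (n k : ℕ) (L : Fin k → List (Fin n)) : Prop :=
  (∀ j, L j ≠ []) ∧ (∀ j, (L j).Nodup) ∧
    (∀ j l, j ≠ l → ∀ x ∈ L j, x ∉ L l) ∧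
    ∀ x : Fin n, ∃ j, x ∈ L j

/-- The statistic `nse` of a list of lists: the sum of `nseList` over its blocks. -/
def nseLL {n k : ℕ} (L : Fin k → List (Fin n)) : ℕ := ∑ j, nseList (L j)

/-- The statistic `nsb` of a list of lists: the number of indices `j` such that
`min (L j) > min (L l)` for some `l > j`. -/
def nsbLL {n k : ℕ} (L : Fin k → List (Fin n)) : ℕ :=
  (Finset.univ.filter fun j : Fin k => ∃ l, j < l ∧ (L l).minimum < (L j).minimum).card


section CyclePart
open Equiv Equiv.Perm

theorem cycleCount_eq {n : ℕ} (σ : Perm (Fin n)) :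
    cycleCount σ + σ.support.card = σ.cycleType.card + n := by
  have h : (Finset.univ.filter fun x => σ x = x).card + σ.support.card = n := by
    have := Finset.card_filter_add_card_filter_not (s := (Finset.univ : Finset (Fin n))) (fun x => σ x = x)
    simpa [Equiv.Perm.support] using this
  unfold cycleCount
  omega

theorem cycleCount_swap_mul {n : ℕ} (f : Perm (Fin n)) (x : Fin n) (hx : f x ≠ x) :
    cycleCount (swap x (f x) * f) = cycleCount f + 1 := by
  set c := cycleOf f x with hc
  have hcx : c x = f x := cycleOf_apply_self f x
  have hcy : c.IsCycle := isCycle_cycleOf f hx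
  have hmem : c ∈ f.cycleFactorsFinset := cycleOf_mem_cycleFactorsFinset_iff.2 (mem_support.2 hx)
  obtain ⟨r, hr⟩ : ∃ r, r = f * c⁻¹ := ⟨_, rfl⟩
  have hd : Disjoint r c := by rw [hr]; exact disjoint_mul_inv_of_mem_cycleFactorsFinset hmem
  have hf : f = c * r := by rw [← hd.commute.eq, hr]; simp
  have h1 := cycleCount_eq f
  have h2 := cycleCount_eq (swap x (f x) * f)
  have e1 : f.cycleType.card = 1 + r.cycleType.card := by
    rw [hf, hd.symm.cycleType_mul, hcy.cycleType]; simp [add_comm]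
  have e2 : f.support.card = c.support.card + r.support.card := by
    rw [hf, hd.symm.card_support_mul]
  have e3 : swap x (f x) * f = (swap x (c x) * c) * r := by
    rw [hcx, mul_assoc, ← hf]
  by_cases hffx : c (c x) = x
  · have hs : c = swap x (c x) := hcy.eq_swap_of_apply_apply_eq_self (by rwa [hcx]) hffx
    have e4 : swap x (f x) * f = r := by
      rw [e3]
      have : swap x (c x) * c = 1 := by
        nth_rewrite 2 [hs]; simp
      rw [this, one_mul]
    have e5 : c.support.card = 2 := by
      rw [hs]; exact card_support_swap (by rw [hcx]; exact hx.symm)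
    rw [e4] at h2 ⊢
    omega
  · have hc' := hcy.swap_mul (by rwa [hcx]) hffx
    have e5 := support_swap_mul_eq c x hffx
    have hd' : Disjoint (swap x (c x) * c) r := by
      rw [disjoint_iff_disjoint_support] at hd ⊢
      rw [e5]
      exact hd.symm.mono_left Finset.sdiff_subset
    have e6 : (swap x (c x) * c).support.card + 1 = c.support.card := by
      rw [e5, Finset.sdiff_singleton_eq_erase]
      exact Finset.card_erase_add_one (mem_support.2 (by rwa [hcx]))
    rw [e3, hd'.cycleType_mul, hc'.cycleType, hd'.card_support_mul] at h2
    simp at h2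
    rw [e3]
    omega

theorem cycleCount_decompose_zero {n : ℕ} (e : Perm (Fin n)) :
    cycleCount (decomposeFin.symm (0, e)) = cycleCount e + 1 := by
  have h : decomposeFin.symm (0, e) = e.extendDomain (finSuccAboveEquiv (0 : Fin (n+1))) := by
    ext x
    refine Fin.cases ?_ (fun i => ?_) x
    · rw [extendDomain_apply_not_subtype] <;> simp
    · have := extendDomain_apply_image e (finSuccAboveEquiv (0 : Fin (n+1))) i
      simp [finSuccAboveEquiv_apply] at this
      rw [this]
      simp
  have h1 := cycleCount_eq e
  have h2 := cycleCount_eq (decomposeFin.symm (0, e))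
  rw [← sum_cycleType] at h1 h2
  rw [h, cycleType_extendDomain, ← h] at h2
  omega

theorem cycleCount_decompose_ne {n : ℕ} (e : Perm (Fin n)) (p : Fin (n+1)) (hp : p ≠ 0) :
    cycleCount (decomposeFin.symm (p, e)) = cycleCount e := by
  have h := cycleCount_swap_mul (decomposeFin.symm (p, e)) 0 (by simpa using hp)
  have h' : swap 0 (decomposeFin.symm (p, e) 0) * decomposeFin.symm (p, e) = decomposeFin.symm (0, e) := by
    ext x
    refine Fin.cases ?_ (fun i => ?_) x
    · simp
    · simp
  rw [h', cycleCount_decompose_zero] at h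
  omega

theorem stirlingFirst_eq_nat (n k : ℕ) : stirlingFirst n k = Nat.stirlingFirst n k := by
  have key : ∀ n k, stirlingFirst n k = ∑ σ : Perm (Fin n), if cycleCount σ = k then 1 else 0 := by
    intro n k
    unfold stirlingFirst
    rw [Set.ncard_eq_toFinset_card', Finset.sum_boole]
    simp
  induction n generalizing k with
  | zero =>
    rw [key]
    cases k <;> simp [cycleCount]
  | succ n ih =>
    rw [key, ← Equiv.sum_comp decomposeFin.symm, Fintype.sum_prod_type, Fin.sum_univ_succ]
    simp only [cycleCount_decompose_zero, fun (i : Fin n) e => cycleCount_decompose_ne e i.succ (Fin.succ_ne_zero i)]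
    rw [← key, ih]
    cases k with
    | zero => simp; cases n <;> simp
    | succ k =>
      simp only [Nat.add_right_cancel_iff]
      rw [← key, ih, Nat.stirlingFirst_succ_succ]
      simp [add_comm]
end CyclePart

section ListPart

variable {α : Type*} [LinearOrder α]

/-- Sets of lists on a finite set `s`. -/
def SL (s : Finset α) (P : Finset (List α)) : Prop :=
  (∀ w ∈ P, w ≠ []) ∧ (∀ w ∈ P, w.Nodup) ∧
    (∀ w ∈ P, ∀ u ∈ P, w ≠ u → ∀ x ∈ w, x ∉ u) ∧
    ∀ x, x ∈ s ↔ ∃ w ∈ P, x ∈ w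

/-- total nse -/
def nseTot (P : Finset (List α)) : ℕ := ∑ w ∈ P, nseList w

theorem SL_insert (s : Finset α) (w : List α) (R : Finset (List α)) (hw : w ∉ R) :
    SL s (insert w R) ↔ w ≠ [] ∧ w.Nodup ∧ (∀ x ∈ w, x ∈ s) ∧
      SL (s \ w.toFinset) R := by
  constructor
  · rintro ⟨h1, h2, h3, h4⟩
    refine ⟨h1 w (by simp), h2 w (by simp), fun x hx => (h4 x).2 ⟨w, by simp, hx⟩,
      fun u hu => h1 u (by simp [hu]), fun u hu => h2 u (by simp [hu]),
      fun u hu v hv => h3 u (by simp [hu]) v (by simp [hv]), fun x => ?_⟩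
    rw [Finset.mem_sdiff, List.mem_toFinset, h4]
    constructor
    · rintro ⟨⟨u, hu, hxu⟩, hxw⟩
      rcases Finset.mem_insert.1 hu with rfl | hu
      · exact absurd hxu hxw
      · exact ⟨u, hu, hxu⟩
    · rintro ⟨u, hu, hxu⟩
      refine ⟨⟨u, by simp [hu], hxu⟩, ?_⟩
      exact h3 u (by simp [hu]) w (by simp) (by rintro rfl; exact hw hu) x hxu
  · rintro ⟨a1, a2, a3, h1, h2, h3, h4⟩
    have key : ∀ u ∈ R, ∀ x ∈ u, x ∉ w := by
      intro u hu x hx hxw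
      have := (h4 x).2 ⟨u, hu, hx⟩
      simp [hxw] at this
    refine ⟨?_, ?_, ?_, ?_⟩
    · simp only [Finset.mem_insert]; rintro u (rfl | hu); exacts [a1, h1 u hu]
    · simp only [Finset.mem_insert]; rintro u (rfl | hu); exacts [a2, h2 u hu]
    · simp only [Finset.mem_insert]
      rintro u (rfl | hu) v (rfl | hv) huv x hx
      · exact absurd rfl huv
      · exact fun hxv => key v hv x hxv hx
      · exact key u hu x hx
      · exact h3 u hu v hv huv x hx
    · intro x
      by_cases hx : x ∈ w
      · simp [hx, a3 x hx]
      · have := h4 x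
        simp [hx] at this ⊢
        exact this

theorem SL_notMem {s : Finset α} {P : Finset (List α)} (h : SL s P) {w : List α} {m : α}
    (hm : m ∈ w) (hs : m ∉ s) : w ∉ P := fun hw => hs ((h.2.2.2 m).2 ⟨w, hw, hm⟩)

theorem nseTot_insert {w : List α} {R : Finset (List α)} (hw : w ∉ R) :
    nseTot (insert w R) = nseList w + nseTot R := by
  unfold nseTot; rw [Finset.sum_insert hw]

theorem nseList_append_max (w : List α) (m : α) (h : ∀ x ∈ w, x < m) :
    nseList (w ++ [m]) = nseList w := by
  induction w with
  | nil => simp [nseList]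
  | cons a w ih =>
    have ha := h a (by simp)
    simp only [List.cons_append, nseList]
    rw [ih (fun x hx => h x (by simp [hx]))]
    congr 2
    simp [ha.le]

theorem nseList_insert_max (u v : List α) (x m : α) (h : ∀ y ∈ u, y < m) (hx : x < m) :
    nseList (u ++ m :: x :: v) = nseList (u ++ x :: v) + 1 := by
  induction u with
  | nil => simp [nseList, hx]; omega
  | cons a u ih =>
    have ha := h a (by simp)
    simp only [List.cons_append, nseList]
    rw [ih (fun x hx => h x (by simp [hx])), ← add_assoc]
    congr 3
    simp only [List.mem_append, List.mem_cons, eq_iff_iff]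
    constructor
    · rintro ⟨b, hb, hba⟩
      have : b ≠ m := fun h => lt_irrefl _ (ha.trans (h ▸ hba))
      exact ⟨b, by tauto, hba⟩
    · rintro ⟨b, hb, hba⟩
      exact ⟨b, by tauto, hba⟩

theorem nseList_lt (w : List α) (hw : w ≠ []) : nseList w < w.length := by
  induction w with
  | nil => exact absurd rfl hw
  | cons a w ih =>
    by_cases h : w = []
    · subst h; simp [nseList]
    · have := ih h
      simp only [nseList, List.length_cons]
      split_ifs <;> omega

theorem SL_finite [Finite α] (s : Finset α) : {P | SL s P}.Finite := by
  have hf : {w : List α | w.Nodup}.Finite := by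
    have := Fintype.ofFinite α
    have h2 : Finite {w : List α // w.Nodup} := inferInstance
    exact h2
  refine (hf.toFinset.powerset.finite_toSet).subset ?_
  intro P hP
  simp only [Finset.coe_powerset, Set.mem_preimage, Set.mem_powerset_iff]
  intro w hw
  simpa using hP.2.1 w hw

theorem SL_card_le {s : Finset α} {P : Finset (List α)} (h : SL s P) :
    nseTot P + P.card ≤ s.card := by
  have h1 : nseTot P + P.card = ∑ w ∈ P, (nseList w + 1) := by
    unfold nseTot; rw [Finset.sum_add_distrib]; simp
  rw [h1]
  have h2 : s = P.biUnion List.toFinset := by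
    ext x; rw [h.2.2.2]; simp
  rw [h2, Finset.card_biUnion]
  · refine Finset.sum_le_sum fun w hw => ?_
    rw [List.toFinset_card_of_nodup (h.2.1 w hw)]
    exact nseList_lt w (h.1 w hw)
  · intro u hu v hv huv
    rw [Function.onFun, Finset.disjoint_left]
    simpa using h.2.2.1 u hu v hv huv

/-- The counted family. -/
def Fam (s : Finset α) (k l : ℕ) : Set (Finset (List α)) :=
  {P | SL s P ∧ P.card = k ∧ nseTot P + l = s.card}

theorem Fam_finite [Finite α] (s : Finset α) (k l : ℕ) : (Fam s k l).Finite :=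
  (SL_finite s).subset fun _ h => h.1

theorem insert_inj_of_mem {m : α} {w w' : List α} {R R' : Finset (List α)}
    (h : insert w R = insert w' R') (hw : m ∈ w) (hw' : m ∈ w') (hR : ∀ u ∈ R, m ∉ u)
    (hR' : ∀ u ∈ R', m ∉ u) : w = w' ∧ R = R' := by
  have h1 : w = w' := by
    have : w ∈ insert w' R' := by rw [← h]; simp
    rcases Finset.mem_insert.1 this with h | h
    · exact h
    · exact absurd hw (hR' w h)
  subst h1
  refine ⟨rfl, ?_⟩
  have a : w ∉ R := fun h => hR w h hw
  have b : w ∉ R' := fun h => hR' w h hw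
  rw [← Finset.erase_insert a, h, Finset.erase_insert b]

/-- Three kinds of sets of lists on `insert m s`. -/
def Fam1 (m : α) (s : Finset α) (k l : ℕ) : Set (Finset (List α)) :=
  {P | P ∈ Fam (insert m s) k l ∧ [m] ∈ P}
def Fam2 (m : α) (s : Finset α) (k l : ℕ) : Set (Finset (List α)) :=
  {P | P ∈ Fam (insert m s) k l ∧ ∃ w, w ≠ [] ∧ w ++ [m] ∈ P}
def Fam3 (m : α) (s : Finset α) (k l : ℕ) : Set (Finset (List α)) :=
  {P | P ∈ Fam (insert m s) k l ∧ ∃ u x v, u ++ m :: x :: v ∈ P}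

theorem SL_unique {s : Finset α} {P : Finset (List α)} (h : SL s P) {w w' : List α}
    (hw : w ∈ P) (hw' : w' ∈ P) {x : α} (hx : x ∈ w) (hx' : x ∈ w') : w = w' := by
  by_contra hne
  exact h.2.2.1 w hw w' hw' hne x hx hx'

theorem split_unique {m : α} {u v u' v' : List α} (h : u ++ m :: v = u' ++ m :: v')
    (hn : (u ++ m :: v).Nodup) : u = u' ∧ v = v' := by
  have hn' := hn
  rw [h] at hn'
  have a : m ∉ u := fun hm => by
    rw [List.nodup_append] at hn
    exact hn.2.2 m hm m (by simp) rfl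
  have b : m ∉ u' := fun hm => by
    rw [List.nodup_append] at hn'
    exact hn'.2.2 m hm m (by simp) rfl
  have h1 := List.append_inj h (by
    have h2 := congrArg (List.idxOf m) h
    rwa [List.idxOf_append_of_notMem a, List.idxOf_append_of_notMem b, List.idxOf_cons_self,
      List.idxOf_cons_self] at h2)
  exact ⟨h1.1, by simpa using h1.2⟩

theorem Fam_split [Finite α] (m : α) (s : Finset α) (k l : ℕ) :
    (Fam (insert m s) k l).ncard =
      (Fam1 m s k l).ncard + (Fam2 m s k l).ncard + (Fam3 m s k l).ncard := by
  have hfin := Fam_finite (insert m s) k l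
  have f1 : (Fam1 m s k l).Finite := hfin.subset fun _ h => h.1
  have f2 : (Fam2 m s k l).Finite := hfin.subset fun _ h => h.1
  have f3 : (Fam3 m s k l).Finite := hfin.subset fun _ h => h.1
  have hu : Fam (insert m s) k l = Fam1 m s k l ∪ Fam2 m s k l ∪ Fam3 m s k l := by
    ext P
    constructor
    · intro hP
      obtain ⟨w, hw, hm⟩ := (hP.1.2.2.2 m).1 (by simp)
      obtain ⟨u, v, rfl⟩ := List.append_of_mem hm
      cases v with
      | nil =>
        by_cases hu : u = []
        · subst hu; exact Or.inl (Or.inl ⟨hP, hw⟩)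
        · exact Or.inl (Or.inr ⟨hP, u, hu, hw⟩)
      | cons x v => exact Or.inr ⟨hP, u, x, v, hw⟩
    · rintro ((h | h) | h) <;> exact h.1
  rw [hu, Set.ncard_union_eq _ (f1.union f2) f3, Set.ncard_union_eq _ f1 f2]
  · rw [Set.disjoint_left]
    rintro P ⟨hP, h1⟩ ⟨_, w, hw, h2⟩
    have := SL_unique hP.1 h1 h2 (x := m) (by simp) (by simp)
    have := split_unique (m := m) (u := []) (v := []) this (by simp)
    exact hw this.1.symm
  · rw [Set.disjoint_left]
    rintro P (⟨hP, h1⟩ | ⟨hP, w, hw, h1⟩) ⟨_, u, x, v, h2⟩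
    · have := SL_unique hP.1 h1 h2 (x := m) (by simp) (by simp)
      have := split_unique (m := m) (u := []) (v := []) this (by simp)
      simp at this
    · have := SL_unique hP.1 h1 h2 (x := m) (by simp) (by simp)
      have := split_unique (m := m) (v := []) this (hP.1.2.1 _ h1)
      simp at this

theorem Fam1_card {m : α} {s : Finset α} (hm : ∀ x ∈ s, x < m) (k l : ℕ) :
    (Fam1 m s (k+1) (l+1)).ncard = (Fam s k l).ncard := by
  have hms : m ∉ s := fun h => lt_irrefl _ (hm m h)
  symm
  refine Set.ncard_congr (fun R _ => insert [m] R) ?_ ?_ ?_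
  · rintro R ⟨hR, hk, hl⟩
    have hn : [m] ∉ R := SL_notMem hR (m := m) (by simp) hms
    refine ⟨⟨?_, ?_, ?_⟩, by simp⟩
    · rw [SL_insert _ _ _ hn]
      have hset : insert m s \ {m} = s := by ext x; simp; grind
      simp [hset, hR]
    · rw [Finset.card_insert_of_notMem hn, hk]
    · rw [nseTot_insert hn, Finset.card_insert_of_notMem hms, ← hl]; simp [nseList]; omega
  · rintro R R' hR hR' h
    exact (insert_inj_of_mem (m := m) h (by simp) (by simp)
      (fun u hu hmu => SL_notMem hR.1 hmu hms hu) (fun u hu hmu => SL_notMem hR'.1 hmu hms hu)).2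
  · rintro P ⟨⟨hP, hk, hl⟩, h⟩
    have hn : [m] ∉ P.erase [m] := by simp
    rw [← Finset.insert_erase h] at hP hk hl
    rw [SL_insert _ _ _ hn] at hP
    rw [nseTot_insert hn, Finset.card_insert_of_notMem hms] at hl
    rw [Finset.card_insert_of_notMem hn] at hk
    have hset : insert m s \ {m} = s := by ext x; simp; grind
    simp [hset] at hP
    exact ⟨P.erase [m], ⟨hP, by omega, by simp [nseList] at hl; omega⟩, Finset.insert_erase h⟩

theorem Fam2_card [Finite α] {m : α} {s : Finset α} (hm : ∀ x ∈ s, x < m) (k l : ℕ) :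
    (Fam2 m s k (l+1)).ncard = k * (Fam s k l).ncard := by
  have hms : m ∉ s := fun h => lt_irrefl _ (hm m h)
  have := (Fam_finite s k l).fintype
  have e : k * (Fam s k l).ncard = Nat.card (Σ P : Fam s k l, {w // w ∈ P.1}) := by
    rw [Nat.card_sigma]
    have : ∀ P : Fam s k l, Nat.card {w // w ∈ P.1} = k := by
      intro P; simp [P.2.2.1]
    simp only [this]
    rw [Finset.sum_const, Set.ncard_eq_toFinset_card']
    simp [mul_comm]
  rw [e, ← Nat.card_coe_set_eq]
  symm
  have hdec : ∀ P w, SL s P → w ∈ P → w ≠ [] ∧ w.Nodup ∧ (∀ x ∈ w, x ∈ s) ∧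
      SL (s \ w.toFinset) (P.erase w) := by
    intro P w hP hw
    rw [← Finset.insert_erase hw] at hP
    exact (SL_insert _ _ _ (by simp)).1 hP
  have hnotR : ∀ P, SL s P → ∀ w, ∀ u ∈ P.erase w, m ∉ u := fun P hP w u hu hmu =>
    SL_notMem hP hmu hms (Finset.mem_of_mem_erase hu)
  refine Nat.card_congr (Equiv.ofBijective
    (fun q => ⟨insert (q.2.1 ++ [m]) (q.1.1.erase q.2.1), ?_⟩) ⟨?_, ?_⟩)
  · obtain ⟨⟨P, hP, hk, hl⟩, w, hw⟩ := q
    obtain ⟨a1, a2, a3, a4⟩ := hdec P w hP hw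
    have hn : w ++ [m] ∉ P.erase w := fun h => hnotR P hP w _ h (by simp)
    have hmw : m ∉ w := fun h => hms (a3 m h)
    refine ⟨⟨?_, ?_, ?_⟩, w, a1, by simp⟩
    · dsimp only
      rw [SL_insert _ _ _ hn]
      refine ⟨by simp, ?_, ?_, ?_⟩
      · rw [List.nodup_append]; simp only [a2, true_and]
        refine ⟨by simp, ?_⟩
        intro a ha b hb; simp at hb; subst hb; rintro rfl; exact hmw ha
      · intro x hx; simp at hx ⊢; rcases hx with hx | hx
        · exact Or.inr (a3 x hx)
        · exact Or.inl hx
      · convert a4 using 1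
        ext x; simp; grind
    · dsimp only
      rw [Finset.card_insert_of_notMem hn, Finset.card_erase_add_one hw, hk]
    · dsimp only
      rw [nseTot_insert hn, nseList_append_max _ _ (fun x hx => hm x (a3 x hx)),
        ← nseTot_insert (by simp), Finset.insert_erase hw, Finset.card_insert_of_notMem hms]
      exact congrArg (· + 1) hl
  · rintro ⟨⟨P, hP⟩, w, hw⟩ ⟨⟨P', hP'⟩, w', hw'⟩ h
    simp only [Subtype.mk.injEq] at h
    obtain ⟨h1, h2⟩ := insert_inj_of_mem (m := m) h (by simp) (by simp) (hnotR P hP.1 w)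
      (hnotR P' hP'.1 w')
    have h3 : w = w' := by simpa using h1
    dsimp only at hw hw'
    have h4 : P = P' := by
      rw [← Finset.insert_erase hw, h2, h3, Finset.insert_erase hw']
    subst h3; subst h4; rfl
  · rintro ⟨P, ⟨hP, hk, hl⟩, w, hw0, hw⟩
    obtain ⟨R, hR⟩ : ∃ R, R = P.erase (w ++ [m]) := ⟨_, rfl⟩
    have hn : w ++ [m] ∉ R := by simp [hR]
    have hPR : P = insert (w ++ [m]) R := by rw [hR, Finset.insert_erase hw]
    subst hPR
    rw [SL_insert _ _ _ hn] at hP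
    obtain ⟨-, a2, a3, a4⟩ := hP
    have hmw : m ∉ w := by
      intro hmw; rw [List.nodup_append] at a2; exact a2.2.2 m hmw m (by simp) rfl
    have hws : ∀ x ∈ w, x ∈ s := by
      intro x hx
      have := a3 x (by simp [hx])
      rcases Finset.mem_insert.1 this with rfl | h
      · exact absurd hx hmw
      · exact h
    have hset : insert m s \ (w ++ [m]).toFinset = s \ w.toFinset := by
      ext x; simp; grind
    rw [hset] at a4
    have hwR : w ∉ R := by
      obtain ⟨x, hx⟩ := List.exists_mem_of_ne_nil w hw0
      exact SL_notMem a4 hx (by simp [hx])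
    have hmem : insert w R ∈ Fam s k l := by
      refine ⟨?_, ?_, ?_⟩
      · rw [SL_insert _ _ _ hwR]
        exact ⟨hw0, (List.nodup_append.1 a2).1, hws, a4⟩
      · rw [Finset.card_insert_of_notMem hwR, ← hk, Finset.card_insert_of_notMem hn]
      · rw [nseTot_insert hn, nseList_append_max _ _ (fun x hx => hm x (hws x hx)),
          Finset.card_insert_of_notMem hms] at hl
        rw [nseTot_insert hwR]; omega
    refine ⟨⟨⟨insert w R, hmem⟩, w, by simp⟩, ?_⟩
    simp [Finset.erase_insert hwR]

theorem Fam3_card {m : α} {s : Finset α} (hm : ∀ x ∈ s, x < m) (k l : ℕ) :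
    (Fam3 m s k l).ncard = s.card * (Fam s k l).ncard := by
  have hms : m ∉ s := fun h => lt_irrefl _ (hm m h)
  have e : s.card * (Fam s k l).ncard = Nat.card (Fam s k l × s) := by
    rw [Nat.card_prod, Nat.card_coe_set_eq]; simp [mul_comm]
  rw [e, ← Nat.card_coe_set_eq]
  have hnot : ∀ P, SL s P → ∀ u ∈ P, m ∉ u := fun P hP u hu hmu => SL_notMem hP hmu hms hu
  -- relation between the two sides
  have fwd : ∀ q : Fam3 m s k l, ∃ p : Fam s k l × s, ∃ u v R, u ++ m :: p.2.1 :: v ∉ R ∧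
      u ++ p.2.1 :: v ∉ R ∧ q.1 = insert (u ++ m :: p.2.1 :: v) R ∧
        p.1.1 = insert (u ++ p.2.1 :: v) R := by
    rintro ⟨P, ⟨hP, hk, hl⟩, u, x, v, hw⟩
    obtain ⟨R, hR⟩ : ∃ R, R = P.erase (u ++ m :: x :: v) := ⟨_, rfl⟩
    have hn : u ++ m :: x :: v ∉ R := by simp [hR]
    have hPR : P = insert (u ++ m :: x :: v) R := by rw [hR, Finset.insert_erase hw]
    subst hPR
    rw [SL_insert _ _ _ hn] at hP
    obtain ⟨-, a2, a3, a4⟩ := hP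
    have a5 : m ∉ u ++ x :: v ∧ (u ++ x :: v).Nodup := by
      have := List.perm_middle (a := m) (l₁ := u) (l₂ := x :: v)
      rw [this.nodup_iff, List.nodup_cons] at a2
      exact a2
    have hws : ∀ y ∈ u ++ x :: v, y ∈ s := by
      intro y hy
      have := a3 y (by simp at hy ⊢; tauto)
      rcases Finset.mem_insert.1 this with rfl | h
      · exact absurd hy a5.1
      · exact h
    have hset : insert m s \ (u ++ m :: x :: v).toFinset = s \ (u ++ x :: v).toFinset := by
      ext x; simp; grind
    rw [hset] at a4
    have hwR : u ++ x :: v ∉ R := SL_notMem a4 (m := x) (by simp) (by simp)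
    have hmem : insert (u ++ x :: v) R ∈ Fam s k l := by
      refine ⟨?_, ?_, ?_⟩
      · rw [SL_insert _ _ _ hwR]
        exact ⟨by simp, a5.2, hws, a4⟩
      · rw [Finset.card_insert_of_notMem hwR, ← hk, Finset.card_insert_of_notMem hn]
      · rw [nseTot_insert hn, nseList_insert_max _ _ _ _ (fun x hx => hm x (hws x (by simp [hx])))
          (hm x (hws x (by simp))), Finset.card_insert_of_notMem hms] at hl
        rw [nseTot_insert hwR]; omega
    exact ⟨(⟨_, hmem⟩, ⟨x, hws x (by simp)⟩), u, v, R, hn, hwR, rfl, rfl⟩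
  choose F U V RR hF1 hF2 hF3 hF4 using fwd
  refine Nat.card_congr (Equiv.ofBijective F ⟨?_, ?_⟩)
  · intro q q' h
    have b1 := hF4 q
    have b2 := hF4 q'
    have b3 := hF3 q
    have b4 := hF3 q'
    have c1 := hF2 q
    have c2 := hF2 q'
    rw [← h] at b2 b4 c2
    have hSL := (F q).1.2.1
    rw [Subtype.ext_iff, b3, b4]
    have i1 : U q ++ (F q).2.1 :: V q ∈ (F q).1.1 := by rw [b1]; simp
    have i2 : U q' ++ (F q).2.1 :: V q' ∈ (F q).1.1 := by rw [b2]; simp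
    have i3 := SL_unique hSL i1 i2 (x := (F q).2.1) (by simp) (by simp)
    obtain ⟨i4, i5⟩ := split_unique i3 (hSL.2.1 _ i1)
    have i6 : RR q = RR q' := by
      rw [← Finset.erase_insert c1, ← b1, i3, b2, Finset.erase_insert c2]
    rw [i4, i5, i6]
  · rintro ⟨⟨P, hP, hk, hl⟩, ⟨x, hx⟩⟩
    obtain ⟨w, hw, hxw⟩ := (hP.2.2.2 x).1 hx
    obtain ⟨u, v, rfl⟩ := List.append_of_mem hxw
    obtain ⟨R, hR⟩ : ∃ R, R = P.erase (u ++ x :: v) := ⟨_, rfl⟩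
    have hn : u ++ x :: v ∉ R := by simp [hR]
    have hPR : P = insert (u ++ x :: v) R := by rw [hR, Finset.insert_erase hw]
    have hP0 := hP
    subst hPR
    rw [SL_insert _ _ _ hn] at hP
    obtain ⟨-, a2, a3, a4⟩ := hP
    have hRm : ∀ u ∈ R, m ∉ u := fun u hu => hnot _ hP0 u (by simp [hu])
    have hn' : u ++ m :: x :: v ∉ R := fun h => hRm _ h (by simp)
    have hmw : m ∉ u ++ x :: v := fun h => hms (a3 m h)
    have hmem : insert (u ++ m :: x :: v) R ∈ Fam3 m s k l := by
      refine ⟨⟨?_, ?_, ?_⟩, u, x, v, by simp⟩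
      · rw [SL_insert _ _ _ hn']
        refine ⟨by simp, ?_, ?_, ?_⟩
        · have := List.perm_middle (a := m) (l₁ := u) (l₂ := x :: v)
          rw [this.nodup_iff, List.nodup_cons]
          exact ⟨hmw, a2⟩
        · intro y hy
          by_cases hym : y = m
          · simp [hym]
          · refine Finset.mem_insert_of_mem (a3 y ?_)
            simp at hy ⊢; tauto
        · convert a4 using 1
          ext x; simp; grind
      · rw [Finset.card_insert_of_notMem hn', ← hk, Finset.card_insert_of_notMem hn]
      · rw [nseTot_insert hn', nseList_insert_max _ _ _ _ (fun y hy => hm y (a3 y (by simp [hy])))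
          (hm x (a3 x (by simp))), Finset.card_insert_of_notMem hms]
        rw [nseTot_insert hn] at hl; omega
    refine ⟨⟨_, hmem⟩, ?_⟩
    obtain ⟨q, hq⟩ : ∃ q : Fam3 m s k l, q = ⟨_, hmem⟩ := ⟨_, rfl⟩
    rw [← hq]
    have b1 := hF3 q
    have b2 := hF4 q
    have hq1 : q.1 = insert (u ++ m :: x :: v) R := by rw [hq]
    have d1 : ∀ w ∈ RR q, m ∉ w := fun w hw => hnot _ (F q).1.2.1 w (by rw [b2]; simp [hw])
    obtain ⟨j1, j2⟩ := insert_inj_of_mem (m := m) (hq1.symm.trans b1) (by simp) (by simp) hRm d1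
    obtain ⟨j3, j4⟩ := split_unique j1 (hmem.1.1.2.1 _ (by simp))
    simp only [List.cons.injEq] at j4
    obtain ⟨j4, j5⟩ := j4
    refine Prod.ext (Subtype.ext ?_) (Subtype.ext j4.symm)
    rw [b2, ← j2, ← j3, ← j4, ← j5]

theorem Fam_card [Finite α] (s : Finset α) (k l : ℕ) :
    (Fam s k l).ncard = Nat.stirlingFirst s.card l * Nat.stirlingSecond l k := by
  induction s using Finset.induction_on_max generalizing k l with
  | empty =>
    have hE : ∀ P : Finset (List α), SL ∅ P ↔ P = ∅ := by
      intro P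
      constructor
      · intro h
        rw [Finset.eq_empty_iff_forall_notMem]
        intro w hw
        obtain ⟨x, hx⟩ := List.exists_mem_of_ne_nil w (h.1 w hw)
        simpa using (h.2.2.2 x).2 ⟨w, hw, hx⟩
      · rintro rfl; simp [SL]
    have : Fam (∅ : Finset α) k l = {P | P = ∅ ∧ k = 0 ∧ l = 0} := by
      ext P
      simp only [Fam, hE, Set.mem_setOf_eq]
      constructor
      · rintro ⟨rfl, h1, h2⟩; simp at h1 h2; exact ⟨rfl, h1.symm, h2.2⟩
      · rintro ⟨rfl, rfl, rfl⟩; simp [nseTot]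
    rw [this]
    cases k <;> cases l <;> simp
  | insert m s hm ih =>
    have hms : m ∉ s := fun h => lt_irrefl _ (hm m h)
    have hempty : (k = 0 ∨ l = 0) → Fam (insert m s) k l = ∅ := by
      intro h
      rw [Set.eq_empty_iff_forall_notMem]
      rintro P ⟨hP, hk, hl⟩
      have h1 := SL_card_le hP
      obtain ⟨w, hw, -⟩ := (hP.2.2.2 m).1 (by simp)
      have := Finset.card_pos.2 ⟨w, hw⟩
      omega
    rw [Finset.card_insert_of_notMem hms]
    cases l with
    | zero => rw [hempty (Or.inr rfl)]; simp
    | succ l =>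
      cases k with
      | zero => rw [hempty (Or.inl rfl)]; simp
      | succ k =>
        rw [Fam_split, Fam1_card hm, Fam2_card hm, Fam3_card hm, ih, ih, ih,
          Nat.stirlingFirst_succ_succ, Nat.stirlingSecond_succ_succ]
        ring

end ListPart

theorem nseList_eq_zero_iff {α : Type*} [LinearOrder α] (w : List α) :
    nseList w = 0 ↔ w.Pairwise (· ≤ ·) := by
  induction w with
  | nil => simp [nseList]
  | cons a w ih =>
    rw [List.pairwise_cons, nseList, Nat.add_eq_zero_iff, ih]
    simp

theorem isSetOfLists_iff (n : ℕ) (P : Finset (List (Fin n))) :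
    IsSetOfLists n P ↔ SL Finset.univ P := by
  simp [IsSetOfLists, SL]

theorem stirlingSecond_eq_nat (n k : ℕ) : stirlingSecond n k = Nat.stirlingSecond n k := by
  have h := Fam_card (Finset.univ : Finset (Fin n)) k n
  rw [Finset.card_univ, Fintype.card_fin, Nat.stirlingFirst_self, one_mul] at h
  rw [← h]
  unfold stirlingSecond
  have hz : ∀ P ∈ Fam (Finset.univ : Finset (Fin n)) k n, ∀ w ∈ P, w.toFinset.sort = w := by
    rintro P ⟨hP, -, h0⟩ w hw
    have h1 : nseTot P = 0 := by simpa using h0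
    have h2 : nseList w = 0 := by
      unfold nseTot at h1
      exact (Finset.sum_eq_zero_iff.1 h1) w hw
    rw [nseList_eq_zero_iff] at h2
    exact (List.toFinset_sort (· ≤ ·) (hP.2.1 w hw)).2 h2
  symm
  refine Set.ncard_congr (fun P _ => P.image List.toFinset) ?_ ?_ ?_
  · intro P hP
    have hz' := hz P hP
    obtain ⟨hP, hk, -⟩ := hP
    refine ⟨⟨?_, ?_, ?_⟩, ?_⟩
    · intro b hb
      obtain ⟨w, hw, rfl⟩ := Finset.mem_image.1 hb
      simpa using hP.1 w hw
    · intro b hb c hc hbc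
      obtain ⟨w, hw, rfl⟩ := Finset.mem_image.1 hb
      obtain ⟨u, hu, rfl⟩ := Finset.mem_image.1 hc
      rw [Finset.disjoint_left]
      simpa using hP.2.2.1 w hw u hu (by rintro rfl; exact hbc rfl)
    · intro x
      obtain ⟨w, hw, hx⟩ := (hP.2.2.2 x).1 (by simp)
      exact ⟨w.toFinset, Finset.mem_image_of_mem _ hw, by simpa using hx⟩
    · rw [Finset.card_image_of_injOn, hk]
      intro w hw u hu hwu
      rw [← hz' w hw, ← hz' u hu]
      rw [hwu]
  · intro P Q hP hQ h
    have e : ∀ P ∈ Fam (Finset.univ : Finset (Fin n)) k n,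
        (P.image List.toFinset).image (fun b => b.sort) = P := by
      intro P hP
      rw [Finset.image_image]
      conv_rhs => rw [← Finset.image_id (s := P)]
      exact Finset.image_congr fun w hw => hz P hP w hw
    rw [← e P hP, ← e Q hQ]
    rw [h]
  · rintro Q ⟨⟨h1, h2, h3⟩, hk⟩
    have hinj : Function.Injective (fun b : Finset (Fin n) => b.sort) := by
      intro b c h
      have := congrArg List.toFinset h
      simpa using this
    refine ⟨Q.image (fun b => b.sort), ⟨⟨?_, ?_, ?_, ?_⟩, ?_, ?_⟩, ?_⟩
    · intro w hw
      obtain ⟨b, hb, rfl⟩ := Finset.mem_image.1 hw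
      intro h0
      obtain ⟨x, hx⟩ := h1 b hb
      have : x ∈ b.sort := (Finset.mem_sort _).2 hx
      rw [h0] at this
      simp at this
    · intro w hw
      obtain ⟨b, hb, rfl⟩ := Finset.mem_image.1 hw
      exact Finset.sort_nodup _ _
    · intro w hw u hu hwu x
      obtain ⟨b, hb, rfl⟩ := Finset.mem_image.1 hw
      obtain ⟨c, hc, rfl⟩ := Finset.mem_image.1 hu
      rw [Finset.mem_sort, Finset.mem_sort]
      have := h2 b hb c hc (by rintro rfl; exact hwu rfl)
      exact fun hx => Finset.disjoint_left.1 this hx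
    · intro x
      obtain ⟨b, hb, hx⟩ := h3 x
      simp only [Finset.mem_univ, true_iff]
      exact ⟨b.sort, Finset.mem_image_of_mem _ hb, (Finset.mem_sort _).2 hx⟩
    · rw [Finset.card_image_of_injective _ hinj, hk]
    · have : nseTot (Q.image (fun b => b.sort)) = 0 := by
        unfold nseTot
        refine Finset.sum_eq_zero fun w hw => ?_
        obtain ⟨b, hb, rfl⟩ := Finset.mem_image.1 hw
        rw [nseList_eq_zero_iff]
        exact Finset.pairwise_sort _ _
      rw [this]; simp
    · rw [Finset.image_image]
      conv_rhs => rw [← Finset.image_id (s := Q)]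
      refine Finset.image_congr fun b hb => ?_
      simp

/-- For `1 ≤ k ≤ n` and `0 ≤ j ≤ n-k`, the number of unordered
partitions of `[n]` into `k` nonempty lists with `nse = j` equals
`c(n, n-j) * S(n-j, k)`. -/
theorem set_of_lists_nse_count (n k j : ℕ) (hk : 1 ≤ k) (hkn : k ≤ n) (hj : j ≤ n - k) :
    Set.ncard {P : Finset (List (Fin n)) | IsSetOfLists n P ∧ P.card = k ∧ nseSL P = j} =
      stirlingFirst n (n - j) * stirlingSecond (n - j) k := by
  rw [stirlingFirst_eq_nat, stirlingSecond_eq_nat]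
  have h := Fam_card (Finset.univ : Finset (Fin n)) k (n - j)
  rw [Finset.card_univ, Fintype.card_fin] at h
  rw [← h]
  congr 1
  ext P
  simp only [Set.mem_setOf_eq, Fam, isSetOfLists_iff, Finset.card_univ, Fintype.card_fin]
  have e : nseSL P = nseTot P := rfl
  rw [e]
  have e2 : nseTot P = j ↔ nseTot P + (n - j) = n := by omega
  rw [e2]
end

section
/- For every integer n ≥ 1, the sum of the statistic nse over all unordered partitions of [n] = {1,…,n} into nonempty lists equals ∑_{j=0}^{n−1} j · c(n, n−j) · B_{n−j}; consequently the average value of nse over all such partitions is (∑_{j=0}^{n−1} j · c(n,n−j) · B_{n−j}) / (∑_{k=0}^{n} c(n,k) · B_k). -/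
open Finset

section Aux

/-- Operator for sets of lists. -/
def opT : ℕ → (ℕ → ℕ → ℕ) → ℕ
  | 0, f => f 0 0
  | n + 1, f => opT n (fun k t => f (k + 1) t + k * f k t + n * f k (t + 1))

/-- Operator for permutations. -/
def opC : ℕ → (ℕ → ℕ → ℕ) → ℕ
  | 0, g => g 0 0
  | n + 1, g => opC n (fun c d => g (c + 1) d + n * g c (d + 1))

/-- Operator for set partitions. -/
def opR : ℕ → (ℕ → ℕ) → ℕ
  | 0, h => h 0
  | m + 1, h => opR m (fun k => h (k + 1) + k * h k)

theorem opR_add (m : ℕ) (h g : ℕ → ℕ) : opR m (fun k => h k + g k) = opR m h + opR m g := by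
  induction m generalizing h g with
  | zero => rfl
  | succ m ih =>
    simp only [opR]
    rw [← ih]
    congr 1; funext k; ring

theorem opR_mul (m c : ℕ) (h : ℕ → ℕ) : opR m (fun k => c * h k) = c * opR m h := by
  induction m generalizing h with
  | zero => rfl
  | succ m ih =>
    simp only [opR]
    rw [← ih]
    congr 1; funext k; ring

theorem opT_eq (n : ℕ) (f : ℕ → ℕ → ℕ) :
    opT n f = opC n (fun c d => opR c (fun k => f k d)) := by
  induction n generalizing f with
  | zero => rfl
  | succ n ih =>
    simp only [opT, opC]
    rw [ih]
    congr 1; funext c d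
    rw [opR_add c (fun k => f (k + 1) d + k * f k d) (fun k => n * f k (d + 1)), opR_mul]
    rfl

/-! Permutations -/

theorem isCycle_swap_mul_of_fixed {α : Type*} [DecidableEq α] [Fintype α] (c : Equiv.Perm α) (a p : α)
    (hc : c.IsCycle) (ha : c a = a) (hp : c p ≠ p) : (Equiv.swap a p * c).IsCycle := by
  have hap : a ≠ p := by rintro rfl; exact hp ha
  have key : ∀ i : ℕ, (Equiv.swap a p * c).SameCycle a ((c ^ i) p) := by
    intro i
    have h0 : (Equiv.swap a p * c).SameCycle a p := ⟨1, by simp [ha]⟩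
    induction i with
    | zero => simpa using h0
    | succ i ih =>
      rw [pow_succ', Equiv.Perm.mul_apply]
      generalize (c ^ i) p = z at ih
      by_cases hz : c z = p
      · rw [hz]; exact h0
      · by_cases hz2 : c z = a
        · rw [hz2]
        · have : (Equiv.swap a p * c) z = c z := by
            rw [Equiv.Perm.mul_apply, Equiv.swap_apply_of_ne_of_ne hz2 hz]
          rw [← this]
          exact ih.trans ⟨1, by simp⟩
  refine ⟨a, by simp [ha]; exact hap.symm, ?_⟩
  intro y hy
  by_cases hya : y = a
  · subst hya; exact Equiv.Perm.SameCycle.refl _ _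
  · have hcy : c y ≠ y := by
      intro h
      apply hy
      have hyp : y ≠ p := by rintro rfl; exact hp h
      rw [Equiv.Perm.mul_apply, h, Equiv.swap_apply_of_ne_of_ne hya hyp]
    obtain ⟨i, hi⟩ := hc.exists_pow_eq hp hcy
    rw [← hi]; exact key i

theorem card_cycleType_swap_mul {α : Type*} [DecidableEq α] [Fintype α] (t : Equiv.Perm α) (a p : α)
    (hap : a ≠ p) (ha : t a = a) : (Equiv.swap a p * t).cycleType.card =
      t.cycleType.card + if t p = p then 1 else 0 := by
  split_ifs with hp
  · have hd : (Equiv.swap a p).Disjoint t := by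
      intro x
      by_cases h1 : x = a
      · subst h1; exact Or.inr ha
      · by_cases h2 : x = p
        · subst h2; exact Or.inr hp
        · exact Or.inl (Equiv.swap_apply_of_ne_of_ne h1 h2)
    rw [hd.cycleType_mul, Multiset.card_add,
      (Equiv.Perm.isCycle_swap hap).cycleType]
    simp [add_comm]
  · set c := t.cycleOf p with hc
    have hcc : c.IsCycle := Equiv.Perm.isCycle_cycleOf t hp
    have hmem : c ∈ t.cycleFactorsFinset := by
      rw [hc, Equiv.Perm.cycleOf_mem_cycleFactorsFinset_iff]; simpa using hp
    have hdis : (t * c⁻¹).Disjoint c :=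
      Equiv.Perm.disjoint_mul_inv_of_mem_cycleFactorsFinset hmem
    have hca : c a = a := by
      rw [hc, Equiv.Perm.cycleOf_apply]; split_ifs <;> simp [ha]
    have hcp : c p ≠ p := by rw [hc, Equiv.Perm.cycleOf_apply_self]; exact hp
    set r := t * c⁻¹ with hr
    have ht : t = c * r := by rw [← hdis.commute.eq, hr]; simp
    have hra : r a = a := by
      rw [hr, Equiv.Perm.mul_apply, Equiv.Perm.inv_eq_iff_eq.2 hca.symm, ha]
    have hcyc := isCycle_swap_mul_of_fixed c a p hcc hca hcp
    have hd2 : (Equiv.swap a p * c).Disjoint r := by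
      intro x
      rcases hdis x with h | h
      · exact Or.inr h
      · by_cases h1 : x = a
        · subst h1; exact Or.inr hra
        · have h2 : x ≠ p := by rintro rfl; exact hcp h
          left
          rw [Equiv.Perm.mul_apply, h, Equiv.swap_apply_of_ne_of_ne h1 h2]
    rw [ht, ← mul_assoc, hd2.cycleType_mul, hdis.symm.cycleType_mul, hcyc.cycleType, hcc.cycleType]
    simp

theorem card_fixed_swap_mul {α : Type*} [DecidableEq α] [Fintype α] (t : Equiv.Perm α) (a p : α)
    (hap : a ≠ p) (ha : t a = a) :
    (univ.filter fun x => (Equiv.swap a p * t) x = x).card + 1 + (if t p = p then 1 else 0) =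
      (univ.filter fun x => t x = x).card := by
  have h : (univ.filter fun x => (Equiv.swap a p * t) x = x) =
      ((univ.filter fun x => t x = x).erase a).erase p := by
    ext x
    rw [mem_filter, mem_erase, mem_erase, mem_filter, Equiv.Perm.mul_apply]
    simp only [mem_univ, true_and]
    constructor
    · intro h
      have h1 : x ≠ a := by
        rintro rfl
        rw [ha, Equiv.swap_apply_left] at h
        exact hap h.symm
      have h2 : x ≠ p := by
        rintro rfl
        have : t x = a := by
          apply (Equiv.swap a x).injective
          rw [h, Equiv.swap_apply_left]
        exact h1 (t.injective (this.trans ha.symm))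
      refine ⟨h2, h1, ?_⟩
      apply (Equiv.swap a p).injective
      rw [h, Equiv.swap_apply_of_ne_of_ne h1 h2]
    · rintro ⟨h2, h1, h⟩
      rw [h, Equiv.swap_apply_of_ne_of_ne h1 h2]
  rw [h, card_erase_eq_ite, ← Finset.card_erase_add_one (s := univ.filter fun x => t x = x) (a := a) (by simp [ha])]
  by_cases hp : t p = p
  · have hm : p ∈ (univ.filter fun x => t x = x).erase a := by simp [hp, hap.symm]
    have := Finset.card_pos.2 ⟨p, hm⟩
    simp only [hm, hp, if_true]
    omega
  · simp [hp]

theorem cycleCount_swap_mul_s12 {n : ℕ} (t : Equiv.Perm (Fin n)) (a p : Fin n)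
    (hap : a ≠ p) (ha : t a = a) : cycleCount (Equiv.swap a p * t) + 1 = cycleCount t := by
  unfold cycleCount
  rw [card_cycleType_swap_mul t a p hap ha]
  have := card_fixed_swap_mul t a p hap ha
  omega

theorem cycleCount_decomposeFin_zero {n : ℕ} (e : Equiv.Perm (Fin n)) :
    cycleCount (Equiv.Perm.decomposeFin.symm (0, e)) = cycleCount e + 1 := by
  have h1 : (Equiv.Perm.decomposeFin.symm (0, e)).cycleType = e.cycleType := by
    have h := Equiv.Perm.cycleType_extendDomain (finSuccAboveEquiv (0 : Fin (n + 1))) (g := e)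
    rw [← h]
    congr 1
    ext x
    refine Fin.cases ?_ (fun i => ?_) x
    · rw [Equiv.Perm.decomposeFin_symm_apply_zero, Equiv.Perm.extendDomain_apply_not_subtype]
      simp
    · have h := Equiv.Perm.extendDomain_apply_image e (finSuccAboveEquiv (0 : Fin (n + 1))) i
      simp only [finSuccAboveEquiv_apply, Fin.succAbove_zero] at h
      simp only [Equiv.Perm.decomposeFin_symm_apply_succ, Equiv.swap_self, Equiv.refl_apply]
      rw [h]
  unfold cycleCount
  rw [h1, add_assoc]
  congr 1
  rw [Finset.card_filter, Finset.card_filter, Fin.sum_univ_succ]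
  simp [add_comm]

theorem decomposeFin_symm_eq {n : ℕ} (p : Fin (n + 1)) (e : Equiv.Perm (Fin n)) :
    Equiv.Perm.decomposeFin.symm (p, e) =
      Equiv.swap 0 p * Equiv.Perm.decomposeFin.symm (0, e) := by
  ext x
  refine Fin.cases ?_ (fun i => ?_) x <;> simp

theorem cycleCount_decomposeFin_succ {n : ℕ} (p : Fin n) (e : Equiv.Perm (Fin n)) :
    cycleCount (Equiv.Perm.decomposeFin.symm (p.succ, e)) = cycleCount e := by
  have h := cycleCount_swap_mul_s12 (Equiv.Perm.decomposeFin.symm (0, e)) 0 p.succ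
    (Fin.succ_ne_zero p).symm (by simp)
  rw [← decomposeFin_symm_eq, cycleCount_decomposeFin_zero] at h
  omega

theorem cycleCount_le {n : ℕ} (e : Equiv.Perm (Fin n)) : cycleCount e ≤ n := by
  have h1 : e.cycleType.card ≤ e.support.card := by
    rw [← Equiv.Perm.sum_cycleType]
    have := Multiset.card_nsmul_le_sum (s := e.cycleType) (a := 1)
      (fun x hx => one_le_two.trans (Equiv.Perm.two_le_of_mem_cycleType hx))
    simpa using this
  have h2 : e.support.card + (univ.filter fun x => e x = x).card = n := by
    have := Finset.card_filter_add_card_filter_not (s := (univ : Finset (Fin n))) (fun x => e x = x)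
    rw [Finset.card_univ, Fintype.card_fin] at this
    rw [add_comm]
    exact this
  unfold cycleCount
  omega

theorem sum_perm (n : ℕ) (g : ℕ → ℕ → ℕ) :
    ∑ e : Equiv.Perm (Fin n), g (cycleCount e) (n - cycleCount e) = opC n g := by
  induction n generalizing g with
  | zero =>
    have : cycleCount (1 : Equiv.Perm (Fin 0)) = 0 := by have := cycleCount_le (1 : Equiv.Perm (Fin 0)); omega
    rw [Fintype.sum_unique]
    have h2 : (default : Equiv.Perm (Fin 0)) = 1 := Subsingleton.elim _ _
    rw [h2, this]; rfl
  | succ n ih =>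
    rw [← Equiv.sum_comp (Equiv.Perm.decomposeFin (n := n)).symm, Fintype.sum_prod_type_right]
    simp only [opC]
    rw [← ih]
    refine Finset.sum_congr rfl fun e _ => ?_
    rw [Fin.sum_univ_succ]
    simp only [cycleCount_decomposeFin_succ, cycleCount_decomposeFin_zero]
    have := cycleCount_le e
    rw [Nat.succ_sub this]
    simp

theorem cycleCount_pos {n : ℕ} (hn : 1 ≤ n) (e : Equiv.Perm (Fin n)) : cycleCount e ≠ 0 := by
  intro h
  unfold cycleCount at h
  have h1 : e.cycleType = 0 := Multiset.card_eq_zero.1 (by omega)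
  rw [Equiv.Perm.cycleType_eq_zero] at h1
  subst h1
  simp at h
  omega

theorem sum_cycle (n : ℕ) (G : ℕ → ℕ) : ∑ e : Equiv.Perm (Fin n), G (cycleCount e) =
    ∑ k ∈ range (n + 1), stirlingFirst n k * G k := by
  rw [← Finset.sum_fiberwise_of_maps_to (s := univ) (t := range (n + 1)) (g := cycleCount)
    (fun e _ => by have := cycleCount_le e; simp; omega)]
  refine Finset.sum_congr rfl fun k _ => ?_
  rw [Finset.sum_congr rfl (g := fun _ => G k) (fun e he => by rw [(mem_filter.1 he).2])]
  rw [Finset.sum_const, smul_eq_mul]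
  congr 1
  unfold stirlingFirst
  rw [← Set.ncard_coe_finset]
  simp
/-! Sets of lists -/

/-- Sets of lists on a finset `s`. -/
def IsSOL {α : Type*} (s : Finset α) (P : Finset (List α)) : Prop :=
  (∀ w ∈ P, w ≠ []) ∧ (∀ w ∈ P, w.Nodup) ∧
    (∀ w ∈ P, ∀ u ∈ P, w ≠ u → ∀ x ∈ w, x ∉ u) ∧
    ∀ x, x ∈ s ↔ ∃ w ∈ P, x ∈ w

theorem finite_isSOL {α : Type*} [Fintype α] [DecidableEq α] (s : Finset α) :
    {P : Finset (List α) | IsSOL s P}.Finite := by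
  have h1 : {w : List α | w.Nodup}.Finite := by
    refine (List.finite_length_le α (Fintype.card α)).subset ?_
    intro w hw
    exact List.Nodup.length_le_card hw
  refine (Finset.finite_toSet h1.toFinset.powerset).subset ?_
  intro P hP
  simp only [coe_powerset, Set.mem_preimage, Set.mem_powerset_iff, Set.Finite.coe_toFinset]
  intro w hw
  exact hP.2.1 w hw

/-- The finset of sets of lists on `s`. -/
noncomputable def solF {α : Type*} [Fintype α] [DecidableEq α] (s : Finset α) :
    Finset (Finset (List α)) := (finite_isSOL s).toFinset

theorem mem_solF {α : Type*} [Fintype α] [DecidableEq α] {s : Finset α} {P : Finset (List α)} :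
    P ∈ solF s ↔ IsSOL s P := by simp [solF]

/-- Insert `a` at position `i`. -/
def insL {α : Type*} (a : α) (w : List α) (i : ℕ) : List α := w.take i ++ a :: w.drop i

theorem mem_insL {α : Type*} {a x : α} {w : List α} {i : ℕ} :
    x ∈ insL a w i ↔ x = a ∨ x ∈ w := by
  conv_rhs => rw [← List.take_append_drop i w]
  simp only [insL, List.mem_append, List.mem_cons]
  tauto

theorem nodup_insL {α : Type*} {a : α} {w : List α} {i : ℕ} (h : w.Nodup) (ha : a ∉ w) :
    (insL a w i).Nodup := by
  unfold insL
  rw [List.nodup_middle, List.take_append_drop]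
  exact List.nodup_cons.2 ⟨ha, h⟩

theorem insL_inj {α : Type*} {a : α} {w x : List α} {i j : ℕ} (hw : a ∉ w) (hx : a ∉ x)
    (hi : i ≤ w.length) (hj : j ≤ x.length) (h : insL a w i = insL a x j) : w = x ∧ i = j := by
  unfold insL at h
  have h1 : a ∉ w.take i := fun h => hw (List.mem_of_mem_take h)
  have h2 : a ∉ x.take j := fun h => hx (List.mem_of_mem_take h)
  have h1' : a ∉ w.drop i := fun h => hw (List.mem_of_mem_drop h)
  obtain ⟨h3, -, h4⟩ := (List.append_cons_inj_of_notMem h1 h1').1 h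
  refine ⟨by rw [← List.take_append_drop i w, h3, h4, List.take_append_drop], ?_⟩
  have := congrArg List.length h3
  simp only [List.length_take] at this
  omega

theorem nse_middle {α : Type*} [LinearOrder α] (a : α) (u v : List α)
    (hu : ∀ x ∈ u, x < a) (hv : ∀ x ∈ v, x < a) :
    nseList (u ++ a :: v) = nseList (u ++ v) + if v = [] then 0 else 1 := by
  induction u with
  | nil =>
    cases v with
    | nil => simp [nseList]
    | cons b v =>
      have : ∃ c ∈ b :: v, c < a := ⟨b, by simp, hv b (by simp)⟩
      simp only [List.nil_append]
      rw [nseList, if_pos this]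
      simp [add_comm]
  | cons b u ih =>
    have ih := ih (fun x hx => hu x (by simp [hx]))
    have hb : ¬ a < b := (hu b (by simp)).le.not_gt
    have : (∃ c ∈ u ++ a :: v, c < b) ↔ ∃ c ∈ u ++ v, c < b := by
      constructor
      · rintro ⟨c, hc, hcb⟩
        refine ⟨c, ?_, hcb⟩
        simp only [List.mem_append, List.mem_cons] at hc ⊢
        rcases hc with h | rfl | h
        · exact Or.inl h
        · exact absurd hcb hb
        · exact Or.inr h
      · rintro ⟨c, hc, hcb⟩
        refine ⟨c, ?_, hcb⟩
        simp only [List.mem_append, List.mem_cons] at hc ⊢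
        tauto
    simp only [List.cons_append, nseList, this, ih]
    ring

theorem nse_insL {α : Type*} [LinearOrder α] (a : α) (w : List α) (i : ℕ)
    (hw : ∀ x ∈ w, x < a) :
    nseList (insL a w i) = nseList w + if i < w.length then 1 else 0 := by
  unfold insL
  rw [nse_middle _ _ _ (fun x h => hw x (List.mem_of_mem_take h))
    (fun x h => hw x (List.mem_of_mem_drop h)), List.take_append_drop]
  congr 1
  by_cases h : i < w.length
  · rw [if_pos h, if_neg (by simpa using h)]
  · rw [if_neg h, if_pos (by simpa using h)]

/-- Child of a set of lists. -/
def childL {α : Type*} [DecidableEq α] (a : α) (P : Finset (List α)) (w : List α) (i : ℕ) :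
    Finset (List α) := insert (insL a w i) (P.erase w)

theorem IsSOL.notMem {α : Type*} {s : Finset α} {P : Finset (List α)} (h : IsSOL s P)
    {a : α} (ha : a ∉ s) {w : List α} (hw : w ∈ P) : a ∉ w := fun h' =>
  ha ((h.2.2.2 a).2 ⟨w, hw, h'⟩)

theorem isSOL_child {α : Type*} [DecidableEq α] {s : Finset α} {a : α} (ha : a ∉ s)
    {P : Finset (List α)} (h : IsSOL s P) {w : List α} (hw : w ∈ insert [] P) (i : ℕ) :
    IsSOL (insert a s) (childL a P w i) := by
  have haw : a ∉ w := by
    rcases mem_insert.1 hw with rfl | hw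
    · simp
    · exact h.notMem ha hw
  have hdis : ∀ u ∈ P.erase w, ∀ x ∈ insL a w i, x ∉ u := by
    intro u hu x hx
    obtain ⟨huw, hu⟩ := mem_erase.1 hu
    rcases mem_insL.1 hx with rfl | hx
    · exact h.notMem ha hu
    · rcases mem_insert.1 hw with rfl | hw
      · simp at hx
      · exact h.2.2.1 w hw u hu huw.symm x hx
  refine ⟨?_, ?_, ?_, ?_⟩
  · intro u hu
    rcases mem_insert.1 hu with rfl | hu
    · simp [insL]
    · exact h.1 u (mem_of_mem_erase hu)
  · intro u hu
    rcases mem_insert.1 hu with rfl | hu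
    · refine nodup_insL ?_ haw
      rcases mem_insert.1 hw with rfl | hw
      · simp
      · exact h.2.1 w hw
    · exact h.2.1 u (mem_of_mem_erase hu)
  · intro u hu v hv huv x hxu hxv
    rcases mem_insert.1 hu with rfl | hu <;> rcases mem_insert.1 hv with rfl | hv
    · exact huv rfl
    · exact hdis v hv x hxu hxv
    · exact hdis u hu x hxv hxu
    · exact h.2.2.1 u (mem_of_mem_erase hu) v (mem_of_mem_erase hv) huv x hxu hxv
  · intro x
    rw [mem_insert, h.2.2.2 x]
    constructor
    · rintro (rfl | ⟨u, hu, hx⟩)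
      · exact ⟨_, mem_insert_self _ _, mem_insL.2 (Or.inl rfl)⟩
      · by_cases huw : u = w
        · subst huw; exact ⟨_, mem_insert_self _ _, mem_insL.2 (Or.inr hx)⟩
        · exact ⟨u, mem_insert_of_mem (mem_erase.2 ⟨huw, hu⟩), hx⟩
    · rintro ⟨u, hu, hx⟩
      rcases mem_insert.1 hu with rfl | hu
      · rcases mem_insL.1 hx with rfl | hx
        · exact Or.inl rfl
        · rcases mem_insert.1 hw with rfl | hw
          · simp at hx
          · exact Or.inr ⟨w, hw, hx⟩
      · exact Or.inr ⟨u, mem_of_mem_erase hu, hx⟩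

theorem child_inj {α : Type*} [DecidableEq α] {s : Finset α} {a : α} (ha : a ∉ s)
    {P Q : Finset (List α)} (hP : IsSOL s P) (hQ : IsSOL s Q) {w x : List α}
    (hw : w ∈ insert [] P) (hx : x ∈ insert [] Q) {i j : ℕ} (hi : i ≤ w.length)
    (hj : j ≤ x.length) (h : childL a P w i = childL a Q x j) : P = Q ∧ w = x ∧ i = j := by
  have haw : a ∉ w := by
    rcases mem_insert.1 hw with rfl | hw
    · simp
    · exact hP.notMem ha hw
  have hax : a ∉ x := by
    rcases mem_insert.1 hx with rfl | hx
    · simp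
    · exact hQ.notMem ha hx
  have h1 : insL a w i = insL a x j := by
    have : insL a w i ∈ childL a Q x j := by rw [← h]; exact mem_insert_self _ _
    rcases mem_insert.1 this with h | h
    · exact h
    · exact absurd (mem_insL.2 (Or.inl rfl)) (hQ.notMem ha (mem_of_mem_erase h))
  obtain ⟨rfl, rfl⟩ := insL_inj haw hax hi hj h1
  refine ⟨?_, rfl, rfl⟩
  have hn : ∀ {R : Finset (List α)}, IsSOL s R → insL a w i ∉ R.erase w := fun hR hm =>
    hR.notMem ha (mem_of_mem_erase hm) (mem_insL.2 (Or.inl rfl))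
  have h2 : P.erase w = Q.erase w := by
    have := congrArg (fun R => R.erase (insL a w i)) h
    simpa [childL, erase_insert (hn hP), erase_insert (hn hQ)] using this
  by_cases hw0 : w = []
  · subst hw0
    rwa [erase_eq_of_notMem (fun h => hP.1 _ h rfl), erase_eq_of_notMem (fun h => hQ.1 _ h rfl)] at h2
  · have hwP : w ∈ P := by simpa [hw0] using hw
    have hwQ : w ∈ Q := by simpa [hw0] using hx
    rw [← insert_erase hwP, h2, insert_erase hwQ]

theorem child_surj {α : Type*} [DecidableEq α] {s : Finset α} {a : α} (ha : a ∉ s)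
    {P' : Finset (List α)} (h : IsSOL (insert a s) P') :
    ∃ P w i, IsSOL s P ∧ w ∈ insert [] P ∧ i ≤ w.length ∧ childL a P w i = P' := by
  obtain ⟨w', hw', haw'⟩ := (h.2.2.2 a).1 (mem_insert_self _ _)
  obtain ⟨u, v, rfl⟩ := List.append_of_mem haw'
  have hnd := h.2.1 _ hw'
  rw [List.nodup_middle, List.nodup_cons] at hnd
  have hmem : ∀ x, x ∈ u ++ a :: v ↔ x = a ∨ x ∈ u ++ v := by
    intro x; simp only [List.mem_append, List.mem_cons]; tauto
  have hins : insL a (u ++ v) u.length = u ++ a :: v := by simp [insL]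
  -- lists other than the one containing a
  have hdis : ∀ w ∈ P', w ≠ u ++ a :: v → ∀ x, (x = a ∨ x ∈ u ++ v) → x ∉ w := by
    intro w hw hne x hx
    exact h.2.2.1 _ hw' w hw hne.symm x ((hmem x).2 hx)
  have hself : u ++ v ∉ P'.erase (u ++ a :: v) ∨ u ++ v = [] := by
    by_cases h0 : u ++ v = []
    · exact Or.inr h0
    · left
      intro hm
      obtain ⟨h1, h2⟩ := mem_erase.1 hm
      obtain ⟨x, hx⟩ := List.exists_mem_of_ne_nil _ h0
      exact hdis _ h2 h1 x (Or.inr hx) hx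
  have hself' : u ++ v ∉ P'.erase (u ++ a :: v) := by
    rcases hself with h1 | h1
    · exact h1
    · rw [h1]; exact fun h2 => h.1 _ (mem_of_mem_erase h2) rfl
  refine ⟨(insert (u ++ v) (P'.erase (u ++ a :: v))).erase [], u ++ v, u.length, ?_, ?_, ?_, ?_⟩
  · refine ⟨fun w hw => (mem_erase.1 hw).1, ?_, ?_, ?_⟩
    · intro w hw
      rcases mem_insert.1 (mem_of_mem_erase hw) with rfl | hw
      · exact hnd.2
      · exact h.2.1 _ (mem_of_mem_erase hw)
    · intro w hw y hy hne x hxw hxy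
      rcases mem_insert.1 (mem_of_mem_erase hw) with rfl | hw <;>
        rcases mem_insert.1 (mem_of_mem_erase hy) with rfl | hy
      · exact hne rfl
      · exact hdis y (mem_of_mem_erase hy) (mem_erase.1 hy).1 x (Or.inr hxw) hxy
      · exact hdis w (mem_of_mem_erase hw) (mem_erase.1 hw).1 x (Or.inr hxy) hxw
      · exact h.2.2.1 w (mem_of_mem_erase hw) y (mem_of_mem_erase hy) hne x hxw hxy
    · intro x
      constructor
      · intro hx
        have hxa : x ≠ a := by rintro rfl; exact ha hx
        obtain ⟨w, hw, hxw⟩ := (h.2.2.2 x).1 (mem_insert_of_mem hx)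
        by_cases hwe : w = u ++ a :: v
        · subst hwe
          have hx2 : x ∈ u ++ v := ((hmem x).1 hxw).resolve_left hxa
          exact ⟨u ++ v, mem_erase.2 ⟨List.ne_nil_of_mem hx2, mem_insert_self _ _⟩, hx2⟩
        · exact ⟨w, mem_erase.2 ⟨List.ne_nil_of_mem hxw,
            mem_insert_of_mem (mem_erase.2 ⟨hwe, hw⟩)⟩, hxw⟩
      · rintro ⟨w, hw, hxw⟩
        rcases mem_insert.1 (mem_of_mem_erase hw) with rfl | hw
        · have h1 := (h.2.2.2 x).2 ⟨_, hw', (hmem x).2 (Or.inr hxw)⟩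
          exact (mem_insert.1 h1).resolve_left (by rintro rfl; exact hnd.1 hxw)
        · have h1 := (h.2.2.2 x).2 ⟨_, mem_of_mem_erase hw, hxw⟩
          refine (mem_insert.1 h1).resolve_left ?_
          rintro rfl
          exact hdis w (mem_of_mem_erase hw) (mem_erase.1 hw).1 x (Or.inl rfl) hxw
  · rw [mem_insert, mem_erase]
    by_cases h0 : u ++ v = []
    · exact Or.inl h0
    · exact Or.inr ⟨h0, mem_insert_self _ _⟩
  · simp
  · unfold childL
    rw [hins, erase_right_comm, erase_insert hself',
      erase_eq_of_notMem (fun h2 => h.1 _ (mem_of_mem_erase h2) rfl), insert_erase hw']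

theorem sum_solF_insert {α : Type*} [Fintype α] [DecidableEq α] {s : Finset α} {a : α} (ha : a ∉ s)
    (F : Finset (List α) → ℕ) :
    ∑ P ∈ solF (insert a s), F P =
      ∑ P ∈ solF s, ∑ w ∈ insert [] P, ∑ i ∈ range (w.length + 1), F (childL a P w i) := by
  have h1 : ∀ P ∈ solF s, ∑ w ∈ insert [] P, ∑ i ∈ range (w.length + 1), F (childL a P w i) =
      ∑ y ∈ (insert [] P).sigma (fun w => range (w.length + 1)), F (childL a P y.1 y.2) := by
    intro P _
    rw [Finset.sum_sigma]
  rw [Finset.sum_congr rfl h1, Finset.sum_sigma']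
  symm
  refine Finset.sum_bij (fun y _ => childL a y.1 y.2.1 y.2.2) ?_ ?_ ?_ ?_
  · rintro ⟨P, w, i⟩ hy
    simp only [mem_sigma, mem_solF, mem_range] at hy
    exact mem_solF.2 (isSOL_child ha hy.1 hy.2.1 i)
  · rintro ⟨P, w, i⟩ hy ⟨Q, x, j⟩ hz h
    simp only [mem_sigma, mem_solF, mem_range] at hy hz
    obtain ⟨rfl, rfl, rfl⟩ := child_inj ha hy.1 hz.1 hy.2.1 hz.2.1
      (Nat.lt_succ_iff.1 hy.2.2) (Nat.lt_succ_iff.1 hz.2.2) h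
    rfl
  · intro P' hP'
    obtain ⟨P, w, i, h1, h2, h3, h4⟩ := child_surj ha (mem_solF.1 hP')
    exact ⟨⟨P, w, i⟩, by simp only [mem_sigma, mem_solF, mem_range]; exact ⟨h1, h2, by omega⟩, h4⟩
  · intros; rfl

theorem IsSOL.sum_length {α : Type*} [DecidableEq α] {s : Finset α} {P : Finset (List α)}
    (h : IsSOL s P) : ∑ w ∈ P, w.length = s.card := by
  have : s = P.biUnion List.toFinset := by
    ext x; simp [h.2.2.2 x]
  rw [this, card_biUnion]
  · exact Finset.sum_congr rfl fun w hw => (List.toFinset_card_of_nodup (h.2.1 w hw)).symm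
  · intro w hw u hu hne
    rw [Function.onFun, Finset.disjoint_left]
    intro x hx hx'
    exact h.2.2.1 w hw u hu hne x (List.mem_toFinset.1 hx) (List.mem_toFinset.1 hx')

theorem child_stats {α : Type*} [LinearOrder α] {s : Finset α} {a : α}
    (ha : ∀ x ∈ s, x < a) {P : Finset (List α)} (h : IsSOL s P) {w : List α}
    (hw : w ∈ insert [] P) (i : ℕ) :
    (childL a P w i).card = P.card + (if w = [] then 1 else 0) ∧
    ∑ u ∈ childL a P w i, nseList u = ∑ u ∈ P, nseList u + if i < w.length then 1 else 0 := by
  have has : a ∉ s := fun h => lt_irrefl _ (ha a h)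
  have hn : insL a w i ∉ P.erase w := fun hm =>
    h.notMem has (mem_of_mem_erase hm) (mem_insL.2 (Or.inl rfl))
  have hlt : ∀ x ∈ w, x < a := by
    intro x hx
    rcases mem_insert.1 hw with rfl | hw
    · simp at hx
    · exact ha x ((h.2.2.2 x).2 ⟨w, hw, hx⟩)
  unfold childL
  rw [card_insert_of_notMem hn, sum_insert hn, nse_insL _ _ _ hlt]
  by_cases h0 : w = []
  · subst h0
    rw [erase_eq_of_notMem (fun h' => h.1 _ h' rfl)]
    simp [nseList]
  · have hwP : w ∈ P := by simpa [h0] using hw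
    rw [card_erase_add_one hwP, ← Finset.add_sum_erase P _ hwP]
    simp only [h0, if_false, add_zero, true_and]
    ring

theorem sum_solF {α : Type*} [Fintype α] [LinearOrder α] (s : Finset α) (f : ℕ → ℕ → ℕ) :
    ∑ P ∈ solF s, f P.card (∑ w ∈ P, nseList w) = opT s.card f := by
  induction s using Finset.induction_on_max generalizing f with
  | empty =>
    have : solF (∅ : Finset α) = {∅} := by
      ext P
      rw [mem_solF, mem_singleton]
      constructor
      · intro h
        rw [Finset.eq_empty_iff_forall_notMem]
        intro w hw
        obtain ⟨x, hx⟩ := List.exists_mem_of_ne_nil _ (h.1 w hw)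
        have := (h.2.2.2 x).2 ⟨w, hw, hx⟩
        simp at this
      · rintro rfl
        simp [IsSOL]
    rw [this]
    simp [opT]
  | insert a s ha ih =>
    have has : a ∉ s := fun h => lt_irrefl _ (ha a h)
    rw [sum_solF_insert has (fun P => f P.card (∑ w ∈ P, nseList w)), card_insert_of_notMem has, opT, ← ih]
    refine Finset.sum_congr rfl fun P hP => ?_
    have hP := mem_solF.1 hP
    have hnil : [] ∉ P := fun h => hP.1 _ h rfl
    rw [sum_insert hnil]
    have e1 : ∀ w ∈ P, ∑ i ∈ range (w.length + 1),
        f (childL a P w i).card (∑ u ∈ childL a P w i, nseList u) =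
        f P.card (∑ w ∈ P, nseList w) + w.length * f P.card (∑ w ∈ P, nseList w + 1) := by
      intro w hw
      have hw0 := hP.1 w hw
      rw [sum_range_succ, add_comm]
      congr 1
      · obtain ⟨h1, h2⟩ := child_stats ha hP (mem_insert_of_mem hw) w.length
        rw [h1, h2]; simp [hw0]
      · rw [Finset.sum_congr rfl (g := fun _ => f P.card (∑ w ∈ P, nseList w + 1))]
        · simp
        · intro i hi
          obtain ⟨h1, h2⟩ := child_stats ha hP (mem_insert_of_mem hw) i
          rw [h1, h2, if_neg hw0, if_pos (mem_range.1 hi)]; rfl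
    rw [Finset.sum_congr rfl e1, sum_add_distrib, ← sum_mul, hP.sum_length]
    obtain ⟨h1, h2⟩ := child_stats ha hP (mem_insert_self [] P) 0
    simp only [List.length_nil, zero_add, sum_range_one]
    rw [h1, h2]
    simp
    ring

/-! Set partitions -/

/-- Set partitions of a finset `s`. -/
def IsSP {α : Type*} (s : Finset α) (P : Finset (Finset α)) : Prop :=
  (∀ w ∈ P, w ≠ ∅) ∧ (∀ w ∈ P, ∀ u ∈ P, w ≠ u → ∀ x ∈ w, x ∉ u) ∧
    ∀ x, x ∈ s ↔ ∃ w ∈ P, x ∈ w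

/-- The finset of set partitions of `s`. -/
noncomputable def spF {α : Type*} [Fintype α] [DecidableEq α] (s : Finset α) :
    Finset (Finset (Finset α)) := (Set.toFinite {P : Finset (Finset α) | IsSP s P}).toFinset

theorem mem_spF {α : Type*} [Fintype α] [DecidableEq α] {s : Finset α} {P : Finset (Finset α)} :
    P ∈ spF s ↔ IsSP s P := by simp [spF]

/-- Child of a set partition. -/
def childS {α : Type*} [DecidableEq α] (a : α) (P : Finset (Finset α)) (w : Finset α) :
    Finset (Finset α) := insert (insert a w) (P.erase w)

theorem IsSP.notMem {α : Type*} {s : Finset α} {P : Finset (Finset α)} (h : IsSP s P)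
    {a : α} (ha : a ∉ s) {w : Finset α} (hw : w ∈ P) : a ∉ w := fun h' =>
  ha ((h.2.2 a).2 ⟨w, hw, h'⟩)

theorem isSP_child {α : Type*} [DecidableEq α] {s : Finset α} {a : α} (ha : a ∉ s)
    {P : Finset (Finset α)} (h : IsSP s P) {w : Finset α} (hw : w ∈ insert ∅ P) :
    IsSP (insert a s) (childS a P w) := by
  have hdis : ∀ u ∈ P.erase w, ∀ x ∈ insert a w, x ∉ u := by
    intro u hu x hx
    obtain ⟨huw, hu⟩ := mem_erase.1 hu
    rcases mem_insert.1 hx with rfl | hx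
    · exact h.notMem ha hu
    · rcases mem_insert.1 hw with rfl | hw
      · simp at hx
      · exact h.2.1 w hw u hu huw.symm x hx
  refine ⟨?_, ?_, ?_⟩
  · intro u hu
    rcases mem_insert.1 hu with rfl | hu
    · exact insert_ne_empty _ _
    · exact h.1 u (mem_of_mem_erase hu)
  · intro u hu v hv huv x hxu hxv
    rcases mem_insert.1 hu with rfl | hu <;> rcases mem_insert.1 hv with rfl | hv
    · exact huv rfl
    · exact hdis v hv x hxu hxv
    · exact hdis u hu x hxv hxu
    · exact h.2.1 u (mem_of_mem_erase hu) v (mem_of_mem_erase hv) huv x hxu hxv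
  · intro x
    rw [mem_insert, h.2.2 x]
    constructor
    · rintro (rfl | ⟨u, hu, hx⟩)
      · exact ⟨_, mem_insert_self _ _, mem_insert_self _ _⟩
      · by_cases huw : u = w
        · subst huw; exact ⟨_, mem_insert_self _ _, mem_insert_of_mem hx⟩
        · exact ⟨u, mem_insert_of_mem (mem_erase.2 ⟨huw, hu⟩), hx⟩
    · rintro ⟨u, hu, hx⟩
      rcases mem_insert.1 hu with rfl | hu
      · rcases mem_insert.1 hx with rfl | hx
        · exact Or.inl rfl
        · rcases mem_insert.1 hw with rfl | hw
          · simp at hx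
          · exact Or.inr ⟨w, hw, hx⟩
      · exact Or.inr ⟨u, mem_of_mem_erase hu, hx⟩

theorem childS_inj {α : Type*} [DecidableEq α] {s : Finset α} {a : α} (ha : a ∉ s)
    {P Q : Finset (Finset α)} (hP : IsSP s P) (hQ : IsSP s Q) {w x : Finset α}
    (hw : w ∈ insert ∅ P) (hx : x ∈ insert ∅ Q)
    (h : childS a P w = childS a Q x) : P = Q ∧ w = x := by
  have haw : a ∉ w := by
    rcases mem_insert.1 hw with rfl | hw
    · simp
    · exact hP.notMem ha hw
  have hax : a ∉ x := by
    rcases mem_insert.1 hx with rfl | hx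
    · simp
    · exact hQ.notMem ha hx
  have h1 : insert a w = insert a x := by
    have : insert a w ∈ childS a Q x := by rw [← h]; exact mem_insert_self _ _
    rcases mem_insert.1 this with h | h
    · exact h
    · exact absurd (mem_insert_self _ _) (hQ.notMem ha (mem_of_mem_erase h))
  have h1' : w = x := by rw [← erase_insert haw, h1, erase_insert hax]
  subst h1'
  refine ⟨?_, rfl⟩
  have hn : ∀ {R : Finset (Finset α)}, IsSP s R → insert a w ∉ R.erase w := fun hR hm =>
    hR.notMem ha (mem_of_mem_erase hm) (mem_insert_self _ _)
  have h2 : P.erase w = Q.erase w := by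
    have h3 : (insert (insert a w) (P.erase w)).erase (insert a w) =
      (insert (insert a w) (Q.erase w)).erase (insert a w) :=
      congrArg (fun R => R.erase (insert a w)) h
    rwa [erase_insert (hn hP), erase_insert (hn hQ)] at h3
  by_cases hw0 : w = ∅
  · subst hw0
    rwa [erase_eq_of_notMem (fun h => hP.1 _ h rfl), erase_eq_of_notMem (fun h => hQ.1 _ h rfl)] at h2
  · have hwP : w ∈ P := by simpa [hw0] using hw
    have hwQ : w ∈ Q := by simpa [hw0] using hx
    rw [← insert_erase hwP, h2, insert_erase hwQ]

theorem childS_surj {α : Type*} [DecidableEq α] {s : Finset α} {a : α} (ha : a ∉ s)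
    {P' : Finset (Finset α)} (h : IsSP (insert a s) P') :
    ∃ P w, IsSP s P ∧ w ∈ insert ∅ P ∧ childS a P w = P' := by
  obtain ⟨w', hw', haw'⟩ := (h.2.2 a).1 (mem_insert_self _ _)
  obtain ⟨b, hab, rfl⟩ : ∃ b, a ∉ b ∧ w' = insert a b :=
    ⟨w'.erase a, notMem_erase _ _, (insert_erase haw').symm⟩
  have hdis : ∀ w ∈ P', w ≠ insert a b → ∀ x, (x = a ∨ x ∈ b) → x ∉ w := by
    intro w hw hne x hx
    exact h.2.1 _ hw' w hw hne.symm x (mem_insert.2 hx)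
  have hself' : b ∉ P'.erase (insert a b) := by
    intro hm
    obtain ⟨h1, h2⟩ := mem_erase.1 hm
    obtain ⟨x, hx⟩ := Finset.nonempty_iff_ne_empty.2 (h.1 _ h2)
    exact hdis _ h2 h1 x (Or.inr hx) hx
  refine ⟨(insert b (P'.erase (insert a b))).erase ∅, b, ?_, ?_, ?_⟩
  · refine ⟨fun w hw => (mem_erase.1 hw).1, ?_, ?_⟩
    · intro w hw y hy hne x hxw hxy
      rcases mem_insert.1 (mem_of_mem_erase hw) with rfl | hw <;>
        rcases mem_insert.1 (mem_of_mem_erase hy) with rfl | hy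
      · exact hne rfl
      · exact hdis y (mem_of_mem_erase hy) (mem_erase.1 hy).1 x (Or.inr hxw) hxy
      · exact hdis w (mem_of_mem_erase hw) (mem_erase.1 hw).1 x (Or.inr hxy) hxw
      · exact h.2.1 w (mem_of_mem_erase hw) y (mem_of_mem_erase hy) hne x hxw hxy
    · intro x
      constructor
      · intro hx
        have hxa : x ≠ a := by rintro rfl; exact ha hx
        obtain ⟨w, hw, hxw⟩ := (h.2.2 x).1 (mem_insert_of_mem hx)
        by_cases hwe : w = insert a b
        · subst hwe
          have hx2 : x ∈ b := (mem_insert.1 hxw).resolve_left hxa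
          exact ⟨b, mem_erase.2 ⟨ne_empty_of_mem hx2, mem_insert_self _ _⟩, hx2⟩
        · exact ⟨w, mem_erase.2 ⟨ne_empty_of_mem hxw,
            mem_insert_of_mem (mem_erase.2 ⟨hwe, hw⟩)⟩, hxw⟩
      · rintro ⟨w, hw, hxw⟩
        rcases mem_insert.1 (mem_of_mem_erase hw) with rfl | hw
        · have h1 := (h.2.2 x).2 ⟨_, hw', mem_insert_of_mem hxw⟩
          exact (mem_insert.1 h1).resolve_left (by rintro rfl; exact hab hxw)
        · have h1 := (h.2.2 x).2 ⟨_, mem_of_mem_erase hw, hxw⟩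
          refine (mem_insert.1 h1).resolve_left ?_
          rintro rfl
          exact hdis w (mem_of_mem_erase hw) (mem_erase.1 hw).1 x (Or.inl rfl) hxw
  · rw [mem_insert, mem_erase]
    by_cases h0 : b = ∅
    · exact Or.inl h0
    · exact Or.inr ⟨h0, mem_insert_self _ _⟩
  · unfold childS
    rw [erase_right_comm, erase_insert hself',
      erase_eq_of_notMem (fun h2 => h.1 _ (mem_of_mem_erase h2) rfl), insert_erase hw']

theorem sum_spF_insert {α : Type*} [Fintype α] [DecidableEq α] {s : Finset α} {a : α} (ha : a ∉ s)
    (F : Finset (Finset α) → ℕ) :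
    ∑ P ∈ spF (insert a s), F P = ∑ P ∈ spF s, ∑ w ∈ insert ∅ P, F (childS a P w) := by
  rw [Finset.sum_sigma']
  symm
  refine Finset.sum_bij (fun y _ => childS a y.1 y.2) ?_ ?_ ?_ ?_
  · rintro ⟨P, w⟩ hy
    simp only [mem_sigma, mem_spF] at hy
    exact mem_spF.2 (isSP_child ha hy.1 hy.2)
  · rintro ⟨P, w⟩ hy ⟨Q, x⟩ hz h
    simp only [mem_sigma, mem_spF] at hy hz
    obtain ⟨rfl, rfl⟩ := childS_inj ha hy.1 hz.1 hy.2 hz.2 h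
    rfl
  · intro P' hP'
    obtain ⟨P, w, h1, h2, h4⟩ := childS_surj ha (mem_spF.1 hP')
    exact ⟨⟨P, w⟩, by simp only [mem_sigma, mem_spF]; exact ⟨h1, h2⟩, h4⟩
  · intros; rfl

theorem childS_card {α : Type*} [DecidableEq α] {s : Finset α} {a : α}
    (has : a ∉ s) {P : Finset (Finset α)} (h : IsSP s P) {w : Finset α}
    (hw : w ∈ insert ∅ P) :
    (childS a P w).card = P.card + (if w = ∅ then 1 else 0) := by
  have hn : insert a w ∉ P.erase w := fun hm =>
    h.notMem has (mem_of_mem_erase hm) (mem_insert_self _ _)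
  unfold childS
  rw [card_insert_of_notMem hn]
  by_cases h0 : w = ∅
  · subst h0
    rw [erase_eq_of_notMem (fun h' => h.1 _ h' rfl)]
    simp
  · have hwP : w ∈ P := by simpa [h0] using hw
    rw [card_erase_add_one hwP]
    simp [h0]

theorem sum_spF {α : Type*} [Fintype α] [DecidableEq α] (s : Finset α) (f : ℕ → ℕ) :
    ∑ P ∈ spF s, f P.card = opR s.card f := by
  induction s using Finset.induction_on generalizing f with
  | empty =>
    have : spF (∅ : Finset α) = {∅} := by
      ext P
      rw [mem_spF, mem_singleton]
      constructor
      · intro h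
        rw [Finset.eq_empty_iff_forall_notMem]
        intro w hw
        obtain ⟨x, hx⟩ := Finset.nonempty_iff_ne_empty.2 (h.1 w hw)
        have := (h.2.2 x).2 ⟨w, hw, hx⟩
        simp at this
      · rintro rfl
        simp [IsSP]
    rw [this]
    simp [opR]
  | insert a s has ih =>
    rw [sum_spF_insert has (fun P => f P.card), card_insert_of_notMem has, opR, ← ih]
    refine Finset.sum_congr rfl fun P hP => ?_
    have hP := mem_spF.1 hP
    have hnil : ∅ ∉ P := fun h => hP.1 _ h rfl
    rw [sum_insert hnil, childS_card has hP (mem_insert_self _ _), if_pos rfl]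
    congr 1
    rw [Finset.sum_congr rfl (g := fun _ => f P.card)]
    · simp
    · intro w hw
      rw [childS_card has hP (mem_insert_of_mem hw), if_neg (hP.1 w hw), add_zero]

theorem opR_const (m c : ℕ) : opR m (fun _ => c) = c * bell m := by
  have h : bell m = (spF (univ : Finset (Fin m))).card := by
    unfold bell
    rw [← Set.ncard_coe_finset]
    congr 1
    ext P
    simp only [Set.mem_ofPred_eq, mem_coe, mem_spF, IsPartitionOf, IsSP,
      Finset.nonempty_iff_ne_empty, Finset.disjoint_left, mem_univ, true_iff]
  have h2 := sum_spF (univ : Finset (Fin m)) (fun _ => c)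
  rw [card_univ, Fintype.card_fin] at h2
  rw [← h2, h, sum_const, smul_eq_mul, mul_comm]

theorem sum_sol_univ (n : ℕ) (g : ℕ → ℕ) :
    ∑ P ∈ solF (univ : Finset (Fin n)), g (nseSL P) =
      ∑ k ∈ range (n + 1), stirlingFirst n k * (g (n - k) * bell k) := by
  have h := sum_solF (univ : Finset (Fin n)) (fun _ t => g t)
  rw [card_univ, Fintype.card_fin, opT_eq, ← sum_perm] at h
  simp only [opR_const] at h
  rw [← sum_cycle n (fun k => g (n - k) * bell k), ← h]
  rfl

theorem coe_solF_univ (n : ℕ) :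
    {P : Finset (List (Fin n)) | IsSetOfLists n P} = ↑(solF (univ : Finset (Fin n))) := by
  ext P
  simp only [Set.mem_ofPred_eq, mem_coe, mem_solF, IsSOL, IsSetOfLists, mem_univ, true_iff]

end Aux

/-- For `n ≥ 1`, the sum of the statistic `nse` over all unordered
partitions of `[n]` into nonempty lists equals `∑_{j=0}^{n-1} j c(n,n-j) B_{n-j}`;
consequently the average value of `nse` over all such partitions is
`(∑_{j=0}^{n-1} j c(n,n-j) B_{n-j}) / (∑_{k=0}^{n} c(n,k) B_k)`. -/
theorem average_nse_set_of_lists (n : ℕ) (hn : 1 ≤ n) :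
    (∑ᶠ P ∈ {P : Finset (List (Fin n)) | IsSetOfLists n P}, nseSL P) =
        ∑ j ∈ Finset.range n, j * stirlingFirst n (n - j) * bell (n - j) ∧
      ((∑ᶠ P ∈ {P : Finset (List (Fin n)) | IsSetOfLists n P}, nseSL P : ℕ) : ℚ) /
          (Set.ncard {P : Finset (List (Fin n)) | IsSetOfLists n P} : ℚ) =
        ((∑ j ∈ Finset.range n, j * stirlingFirst n (n - j) * bell (n - j) : ℕ) : ℚ) /
          ((∑ k ∈ Finset.range (n + 1), stirlingFirst n k * bell k : ℕ) : ℚ) := by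
  have h1 : (∑ᶠ P ∈ {P : Finset (List (Fin n)) | IsSetOfLists n P}, nseSL P) =
        ∑ j ∈ Finset.range n, j * stirlingFirst n (n - j) * bell (n - j) := by
    rw [coe_solF_univ, finsum_mem_coe_finset, sum_sol_univ n (fun t => t),
      ← Finset.sum_range_reflect, Finset.sum_range_succ]
    have h0 : stirlingFirst n 0 = 0 := by
      unfold stirlingFirst
      rw [Set.ncard_eq_zero]
      ext e
      simpa using cycleCount_pos hn e
    simp only [Nat.add_sub_cancel, Nat.sub_self, h0, zero_mul, add_zero]
    refine Finset.sum_congr rfl fun j hj => ?_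
    have := Finset.mem_range.1 hj
    rw [Nat.sub_sub_self this.le]
    ring
  have h2 : Set.ncard {P : Finset (List (Fin n)) | IsSetOfLists n P} =
      ∑ k ∈ Finset.range (n + 1), stirlingFirst n k * bell k := by
    rw [coe_solF_univ, Set.ncard_coe_finset, Finset.card_eq_sum_ones,
      sum_sol_univ n (fun _ => 1)]
    simp
  exact ⟨h1, by rw [h1, h2]⟩
end
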